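/- Lerch's formula (Lerch, 1897, typical of Lerch's number-theoretic work): for the digamma function ψ, one has ∫₀¹ ψ(x) dx = −γ in the improper sense, equivalently ∫₀¹ log Γ(x) dx = log √(2π) (Raabe's formula at a = 0). -/

import Mathlib

open Real

theorem raabe_aux_integrable :
    IntervalIntegrable (fun x : ℝ => Real.log (Real.Gamma x)) MeasureTheory.volume 0 1 := by
  have h1 : IntervalIntegrable (fun x : ℝ => Real.log (Real.Gamma (x + 1)) - Real.log x)
      MeasureTheory.volume 0 1 := by
    refine IntervalIntegrable.sub ?_ intervalIntegral.intervalIntegrable_log'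
    apply ContinuousOn.intervalIntegrable
    intro x hx
    rw [Set.uIcc_of_le zero_le_one] at hx
    have hx1 : 0 < x + 1 := by linarith [hx.1]
    have hd : ContinuousAt Real.Gamma (x + 1) := by
      refine (Real.differentiableAt_Gamma fun m hm => ?_).continuousAt
      have : (0 : ℝ) ≤ m := Nat.cast_nonneg m
      linarith
    have h2 : ContinuousAt (fun y : ℝ => Real.Gamma (y + 1)) x :=
      ContinuousAt.comp (f := fun y : ℝ => y + 1) (g := Real.Gamma) hd (by fun_prop)
    exact (h2.log (Real.Gamma_pos_of_pos hx1).ne').continuousWithinAt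
  refine h1.congr ?_
  intro x hx
  rw [Set.uIoc_of_le zero_le_one] at hx
  simp only
  rw [Real.Gamma_add_one hx.1.ne', Real.log_mul hx.1.ne' (Real.Gamma_pos_of_pos hx.1).ne']
  ring

/-- Raabe/Lerch integral: `∫₀¹ log Γ(x) dx = (1/2)·log (2π)`. -/
theorem raabe_lerch : (∫ x in (0:ℝ)..1, Real.log (Real.Gamma x)) = (1 / 2) * Real.log (2 * π) := by
  have hi := raabe_aux_integrable
  have hi' : IntervalIntegrable (fun x : ℝ => Real.log (Real.Gamma (1 - x)))
      MeasureTheory.volume 0 1 := by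
    simpa using (hi.comp_sub_left 1).symm
  have hr : (∫ x in (0:ℝ)..1, Real.log (Real.Gamma (1 - x)))
      = ∫ x in (0:ℝ)..1, Real.log (Real.Gamma x) := by
    simpa using intervalIntegral.integral_comp_sub_left
      (a := 0) (b := 1) (fun x : ℝ => Real.log (Real.Gamma x)) 1
  have hs : (∫ x in (0:ℝ)..1, Real.log (Real.sin (π * x))) = - Real.log 2 := by
    have := intervalIntegral.integral_comp_mul_left (a := 0) (b := 1)
      (fun x : ℝ => Real.log (Real.sin x)) Real.pi_ne_zero
    rw [this, mul_zero, mul_one, integral_log_sin_zero_pi, smul_eq_mul]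
    field_simp
  have hsi : IntervalIntegrable (fun x : ℝ => Real.log (Real.sin (π * x)))
      MeasureTheory.volume 0 1 := by
    have := (intervalIntegrable_log_sin (a := 0) (b := π)).comp_mul_left (c := π)
    simpa [Real.pi_ne_zero] using this
  have key : (∫ x in (0:ℝ)..1, (Real.log (Real.Gamma x) + Real.log (Real.Gamma (1 - x))))
      = ∫ x in (0:ℝ)..1, (Real.log π - Real.log (Real.sin (π * x))) := by
    apply intervalIntegral.integral_congr_Ioo_of_le zero_le_one
    intro x hx
    have hp : 0 < Real.sin (π * x) := Real.sin_pos_of_pos_of_lt_pi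
      (mul_pos Real.pi_pos hx.1) (by nlinarith [Real.pi_pos, hx.2])
    have h1x : 0 < 1 - x := by linarith [hx.2]
    simp only
    rw [← Real.log_mul (Real.Gamma_pos_of_pos hx.1).ne' (Real.Gamma_pos_of_pos h1x).ne',
      Real.Gamma_mul_Gamma_one_sub, Real.log_div Real.pi_ne_zero hp.ne']
  rw [intervalIntegral.integral_add hi hi', hr,
    intervalIntegral.integral_sub (by simp) hsi, hs] at key
  rw [Real.log_mul two_ne_zero Real.pi_ne_zero]
  simp at key
  linarith
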